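/- arXiv:0802.2857 — 5 statements merged into one kernel-verified Lean document; each statement's English description precedes it below -/
import Mathlib

section
/- Let R be a commutative ring, σ a type, p a multivariate polynomial in MvPolynomial σ R, y : σ → R, and d ≥ 1 a natural number with totalDegree p ≤ d. Then the polynomial p(X + y) − p(X), obtained by substituting X_i + y_i for each variable X_i in p and subtracting p, has total degree at most d − 1. -/
/-!
By linearity it suffices to treat monic monomials. Writing `Δ q = q(X + y) - q`, the twisted
Leibniz rule `Δ (X i * q) = X i * Δ q + y i * (Δ q + q)` lets one induct on the number of
factors of a monomial: each summand on the right has degree at most that of `q`. Monomials are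
treated as products of variables over a multiset, so that the induction adds one factor at a time.
-/

open MvPolynomial in
/-- The case of a monic monomial. For the empty product the difference is `0`, which agrees with
the truncated bound `0 - 1 = 0`. -/
theorem totalDegree_shift_sub_prod_X_le {R : Type*} [CommRing R] {σ : Type*} (y : σ → R)
    (m : Multiset σ) :
    (bind₁ (fun i => X i + C (y i)) (m.map (X (R := R))).prod
      - (m.map X).prod).totalDegree ≤ m.card - 1 := by
  rcases subsingleton_or_nontrivial R with _ | _
  · rw [Subsingleton.elim (_ - _) (0 : MvPolynomial σ R), totalDegree_zero]
    exact Nat.zero_le _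
  induction m using Multiset.induction_on with
  | empty => simp
  | cons i m ih =>
    rcases Multiset.empty_or_exists_mem m with rfl | ⟨j, hj⟩
    · simp
    have hm : 0 < m.card := Multiset.card_pos_iff_exists_mem.2 ⟨j, hj⟩
    have hq : (m.map (X (R := R))).prod.totalDegree ≤ m.card :=
      (totalDegree_multiset_prod _).trans (by simp [Multiset.map_map, Function.comp_def])
    simp only [Multiset.map_cons, Multiset.prod_cons, Multiset.card_cons, map_mul, bind₁_X_right,
      Nat.add_sub_cancel]
    generalize (m.map (X (R := R))).prod = q at ih hq ⊢
    generalize bind₁ (fun i => X i + C (y i)) q = q' at ih ⊢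
    have key : (X i + C (y i)) * q' - X i * q = X i * (q' - q) + C (y i) * ((q' - q) + q) := by
      ring
    rw [key]
    refine (totalDegree_add _ _).trans (max_le ?_ ?_)
    · refine (totalDegree_mul _ _).trans ?_
      rw [totalDegree_X]
      omega
    · refine (totalDegree_mul _ _).trans ?_
      rw [totalDegree_C, zero_add]
      exact (totalDegree_add _ _).trans (max_le (by omega) hq)

theorem directional_derivative_totalDegree_le {R : Type*} [CommRing R] {σ : Type*}
    (p : MvPolynomial σ R) (y : σ → R) (d : ℕ) (hd : 1 ≤ d)
    (hp : p.totalDegree ≤ d) :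
    (MvPolynomial.bind₁ (fun i => MvPolynomial.X i + MvPolynomial.C (y i)) p
      - p).totalDegree ≤ d - 1 := by
  have hmon (v : σ →₀ ℕ) (a : R) : MvPolynomial.monomial v a =
      MvPolynomial.C a * ((Finsupp.toMultiset v).map MvPolynomial.X).prod := by
    rw [MvPolynomial.monomial_eq, Finsupp.toMultiset_map, Finsupp.prod_toMultiset,
      Finsupp.prod_mapDomain_index (fun _ => pow_zero _) (fun _ _ _ => pow_add _ _ _)]
  have hsum : MvPolynomial.bind₁ (fun i => MvPolynomial.X i + MvPolynomial.C (y i)) p - p =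
      ∑ v ∈ p.support, (MvPolynomial.bind₁ (fun i => MvPolynomial.X i + MvPolynomial.C (y i))
        (MvPolynomial.monomial v (p.coeff v)) - MvPolynomial.monomial v (p.coeff v)) := by
    rw [Finset.sum_sub_distrib, ← map_sum, ← MvPolynomial.as_sum]
  rw [hsum]
  refine MvPolynomial.totalDegree_finsetSum_le fun v hv => ?_
  rw [hmon, map_mul, MvPolynomial.bind₁_C_right, ← mul_sub]
  refine (MvPolynomial.totalDegree_mul _ _).trans ?_
  rw [MvPolynomial.totalDegree_C, zero_add]
  refine (totalDegree_shift_sub_prod_X_le y _).trans (Nat.sub_le_sub_right ?_ 1)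
  rw [Finsupp.card_toMultiset]
  exact (MvPolynomial.le_totalDegree hv).trans hp
end

section
/- Let x_1, ..., x_k ∈ (Fin n → ZMod 2), let l be their linear rank and q their quadratic rank. Then q ≤ l(l−1)/2 + l (i.e. q ≤ C(l,2) + l). -/
/-!
Write the points in coordinates with respect to a basis `b` of their span, of size `l = linRank x`,
and let `c a : Fin k → ZMod 2` list the `a`-th coordinates of the points. Each ambient coordinate
`i ↦ x i p` is a linear combination of the `c a`, so a product of two of them is a combination of
products `c a * c a'`. Since `c a = c a * c a` over `𝔽₂`, the linear terms are combinations of such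
products too. Hence evaluations of quadratic functions lie in the span of a family indexed by
unordered pairs in `Sym2 (Fin l)`, of which there are `(l + 1).choose 2 = l.choose 2 + l`.
-/

/-- A quadratic function vanishing at 0 on `(ZMod 2)^n`. -/
def IsQuadratic {n : ℕ} (f : (Fin n → ZMod 2) → ZMod 2) : Prop :=
  ∃ (A : Fin n → Fin n → ZMod 2) (B : Fin n → ZMod 2),
    ∀ x, f x = (∑ i, ∑ j ∈ Finset.univ.filter (fun j => i < j), A i j * x i * x j)
      + ∑ i, B i * x i

/-- The linear rank of `x_1, ..., x_k`: the `𝔽₂`-dimension of their span. -/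
noncomputable def linRank {n k : ℕ} (x : Fin k → Fin n → ZMod 2) : ℕ :=
  Module.finrank (ZMod 2) (Submodule.span (ZMod 2) (Set.range x))

/-- The quadratic rank of `x_1, ..., x_k`: the `𝔽₂`-dimension of the image of the
space of quadratic functions vanishing at 0 under evaluation at `x_1, ..., x_k`. -/
noncomputable def quadRank {n k : ℕ} (x : Fin k → Fin n → ZMod 2) : ℕ :=
  Module.finrank (ZMod 2)
    (Submodule.span (ZMod 2)
      {v : Fin k → ZMod 2 | ∃ f, IsQuadratic f ∧ ∀ i, v i = f (x i)})

/-- Evaluations of quadratic functions lie in every subspace that contains all products of elements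
of some family `c` over `𝔽₂`, provided that `c` spans the coordinate functions of the points. -/
lemma quadratic_eval_mem {n k : ℕ} {ι : Type*} (x : Fin k → Fin n → ZMod 2)
    (c : ι → Fin k → ZMod 2) (S : Submodule (ZMod 2) (Fin k → ZMod 2))
    (hc : ∀ p, (fun i => x i p) ∈ Submodule.span (ZMod 2) (Set.range c))
    (hS : ∀ a a', c a * c a' ∈ S) {f : (Fin n → ZMod 2) → ZMod 2} (hf : IsQuadratic f) :
    (fun i => f (x i)) ∈ S := by
  obtain ⟨A, B, hAB⟩ := hf
  have hmul : ∀ p q, (fun i => x i p) * (fun i => x i q) ∈ S := by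
    intro p q
    have h := Submodule.mul_mem_mul (hc p) (hc q)
    rw [Submodule.span_mul_span] at h
    refine Submodule.span_le.2 ?_ h
    rintro _ ⟨_, ⟨a, rfl⟩, _, ⟨a', rfl⟩, rfl⟩
    exact hS a a'
  have hsq : ∀ t : ZMod 2, t * t = t := by decide
  have hlin : ∀ p, (fun i => x i p) ∈ S := by
    intro p
    have h := hmul p p
    rwa [show (fun i => x i p) * (fun i => x i p) = fun i => x i p from
      funext fun i => hsq (x i p)] at h
  have key : (fun i => f (x i)) =
      (∑ p, ∑ q ∈ Finset.univ.filter (fun q => p < q),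
        A p q • ((fun i => x i p) * (fun i => x i q))) + ∑ p, B p • (fun i => x i p) := by
    funext i
    simp [hAB, Finset.sum_apply, mul_assoc]
  rw [key]
  exact S.add_mem
    (S.sum_mem fun p _ => S.sum_mem fun q _ => S.smul_mem _ (hmul p q))
    (S.sum_mem fun p _ => S.smul_mem _ (hlin p))

theorem quadRank_le_choose_linRank {n k : ℕ} (x : Fin k → Fin n → ZMod 2) :
    quadRank x ≤ (linRank x).choose 2 + linRank x := by
  let b := Module.finBasis (ZMod 2) (Submodule.span (ZMod 2) (Set.range x))
  let y : Fin k → Submodule.span (ZMod 2) (Set.range x) :=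
    fun i => ⟨x i, Submodule.subset_span ⟨i, rfl⟩⟩
  let c : Fin (linRank x) → Fin k → ZMod 2 := fun a i => b.repr (y i) a
  let g : Sym2 (Fin (linRank x)) → Fin k → ZMod 2 :=
    Sym2.lift ⟨fun a a' => c a * c a', fun a a' => mul_comm _ _⟩
  have hc : ∀ p, (fun i => x i p) ∈ Submodule.span (ZMod 2) (Set.range c) := by
    intro p
    have h : (fun i => x i p) = ∑ a, (b a : Fin n → ZMod 2) p • c a := by
      funext i
      have h1 := congrArg (fun z : Submodule.span (ZMod 2) (Set.range x) =>
        (z : Fin n → ZMod 2) p) (b.sum_repr (y i))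
      simp only [Submodule.coe_sum, Submodule.coe_smul, Finset.sum_apply, Pi.smul_apply,
        smul_eq_mul] at h1 ⊢
      rw [show x i p = (y i : Fin n → ZMod 2) p from rfl, ← h1]
      exact Finset.sum_congr rfl fun a _ => mul_comm _ _
    rw [h]
    exact Submodule.sum_mem _ fun a _ =>
      Submodule.smul_mem _ _ (Submodule.subset_span ⟨a, rfl⟩)
  have hle : Submodule.span (ZMod 2)
      {v : Fin k → ZMod 2 | ∃ f, IsQuadratic f ∧ ∀ i, v i = f (x i)} ≤
      Submodule.span (ZMod 2) (Set.range g) := by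
    rw [Submodule.span_le]
    rintro v ⟨f, hf, hv⟩
    rw [show v = fun i => f (x i) from funext hv]
    exact quadratic_eval_mem x c (Submodule.span (ZMod 2) (Set.range g)) hc
      (fun a a' => Submodule.subset_span ⟨s(a, a'), rfl⟩) hf
  calc quadRank x ≤ Module.finrank (ZMod 2) (Submodule.span (ZMod 2) (Set.range g)) :=
        Submodule.finrank_mono hle
    _ ≤ Fintype.card (Sym2 (Fin (linRank x))) := finrank_range_le_card g
    _ = (linRank x).choose 2 + linRank x := by
        rw [Sym2.card, Fintype.card_fin, Nat.choose_succ_succ' _ 1, Nat.choose_one_right, add_comm]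
end

section
/- Let x_1, ..., x_k ∈ (Fin n → ZMod 2), let l be their linear rank and q their quadratic rank, and suppose q ≥ 1. Then (l : ℝ) ≥ φ(q), where φ(x) = (√(1+8x) − 1)/2. -/
/-- `φ(x) = (√(1+8x) − 1)/2`, the nonnegative solution of `y²/2 + y/2 = x`. -/
noncomputable def phi (x : ℝ) : ℝ := (Real.sqrt (1 + 8 * x) - 1) / 2

/-- For a subspace `U` of a commutative algebra, `U * U` is spanned by the products of unordered
pairs of basis vectors of `U`. -/
lemma finrank_mul_self_le {K R : Type*} [Field K] [CommRing R] [Algebra K R]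
    (U : Submodule K R) [FiniteDimensional K U] :
    Module.finrank K (U * U : Submodule K R) ≤ (Module.finrank K U + 1).choose 2 := by
  let b := Module.finBasis K U
  let g : Sym2 (Fin (Module.finrank K U)) → R :=
    Sym2.lift ⟨fun i j => (b i : R) * (b j : R), fun i j => mul_comm _ _⟩
  have hU : Submodule.span K (Set.range fun i => (b i : R)) = U := by
    have h := congrArg (Submodule.map U.subtype) b.span_eq
    rw [Submodule.map_span, Submodule.map_top, Submodule.range_subtype, ← Set.range_comp] at h
    exact h
  have hle : U * U ≤ Submodule.span K (Set.range g) := by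
    conv_lhs => rw [← hU, Submodule.span_mul_span]
    refine Submodule.span_mono ?_
    rintro _ ⟨_, ⟨i, rfl⟩, _, ⟨j, rfl⟩, rfl⟩
    exact ⟨s(i, j), rfl⟩
  have : FiniteDimensional K (Submodule.span K (Set.range g)) :=
    FiniteDimensional.span_of_finite K (Set.finite_range g)
  calc Module.finrank K (U * U : Submodule K R)
      ≤ Module.finrank K (Submodule.span K (Set.range g)) := Submodule.finrank_mono hle
    _ ≤ Fintype.card (Sym2 (Fin (Module.finrank K U))) := finrank_range_le_card g
    _ = (Module.finrank K U + 1).choose 2 := by rw [Sym2.card, Fintype.card_fin]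

lemma quadRank_le_choose {n k : ℕ} (x : Fin k → Fin n → ZMod 2) :
    quadRank x ≤ (linRank x + 1).choose 2 := by
  let u : Fin n → Fin k → ZMod 2 := fun j i => x i j
  let U := Submodule.span (ZMod 2) (Set.range u)
  -- row rank equals column rank
  have hU : Module.finrank (ZMod 2) U = linRank x :=
    (Matrix.rank_eq_finrank_span_cols (Matrix.of x)).symm.trans
      (Matrix.rank_eq_finrank_span_row (Matrix.of x))
  have hu : ∀ j, u j ∈ U := fun j => Submodule.subset_span ⟨j, rfl⟩
  rw [← hU]
  refine le_trans (Submodule.finrank_mono (Submodule.span_le.2 ?_)) (finrank_mul_self_le U)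
  rintro v ⟨f, ⟨A, B, hf⟩, hv⟩
  have hsq : ∀ a : ZMod 2, a * a = a := by decide
  have hv' : v = (∑ i, ∑ j ∈ Finset.univ.filter (fun j => i < j), A i j • (u i * u j))
      + ∑ i, B i • (u i * u i) := by
    funext t
    simp [hv, hf, u, hsq, Finset.sum_apply, mul_assoc]
  rw [hv']
  exact add_mem
    (sum_mem fun i _ => sum_mem fun j _ =>
      Submodule.smul_mem _ _ (Submodule.mul_mem_mul (hu i) (hu j)))
    (sum_mem fun i _ => Submodule.smul_mem _ _ (Submodule.mul_mem_mul (hu i) (hu i)))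

theorem linRank_ge_phi_quadRank {n k : ℕ} (x : Fin k → Fin n → ZMod 2)
    (hq : 1 ≤ quadRank x) :
    (linRank x : ℝ) ≥ phi (quadRank x) := by
  have h : (quadRank x : ℝ) ≤ ((linRank x + 1).choose 2 : ℕ) :=
    Nat.cast_le.2 (quadRank_le_choose x)
  rw [Nat.cast_choose_two] at h
  push_cast at h
  -- `1 + 8 q ≤ (2 l + 1)²`
  have hs : Real.sqrt (1 + 8 * (quadRank x : ℝ)) ≤ 2 * (linRank x : ℝ) + 1 :=
    Real.sqrt_le_iff.2 ⟨by positivity, by nlinarith⟩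
  unfold phi
  linarith
end

section
/- There exist a constant c > 0 and a natural number N such that for every n ≥ N: the number of quadratic functions f vanishing at 0 on (Fin n → ZMod 2) for which there exists a linear function g with agreement d(f,g) > 2^(−c·n) is at most 2^(−c·n) times the total number of quadratic functions vanishing at 0. In other words, all but an exponentially small fraction of random quadratic functions are 2^(−Ω(n))-far from all linear functions. -/
/-- A linear function on `(ZMod 2)^n`. -/
def IsLinearFun {n : ℕ} (g : (Fin n → ZMod 2) → ZMod 2) : Prop :=
  ∃ c : Fin n → ZMod 2, ∀ x, g x = ∑ i, c i * x i

/-- The agreement `d(f,g) = |P_x[f(x)=g(x)] − P_x[f(x)≠g(x)]|` for uniform `x`. -/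
noncomputable def agreement {n : ℕ} (f g : (Fin n → ZMod 2) → ZMod 2) : ℝ :=
  |((Finset.univ.filter (fun x => f x = g x)).card : ℝ)
    - ((Finset.univ.filter (fun x => f x ≠ g x)).card : ℝ)| / 2 ^ n

open Finset

/-- The set of `h` whose polarization `x ↦ f (x + h) + f x + f h` vanishes identically; for a
quadratic `f` this is the radical of the associated alternating bilinear form. -/
noncomputable def radical {n : ℕ} (f : (Fin n → ZMod 2) → ZMod 2) : Finset (Fin n → ZMod 2) :=
  open Classical in univ.filter (fun h => ∀ x, f (x + h) + f x + f h = 0)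

/-- The finset of all quadratic functions vanishing at `0`. -/
noncomputable def quadratics (n : ℕ) : Finset ((Fin n → ZMod 2) → ZMod 2) :=
  open Classical in univ.filter IsQuadratic

/-- The character `a ↦ (-1)^a` of `ZMod 2`, with real values. -/
def signChar (a : ZMod 2) : ℝ := if a = 0 then 1 else -1

lemma signChar_add (a b : ZMod 2) : signChar (a + b) = signChar a * signChar b := by
  have key : ∀ a b : ZMod 2, (a + b = 0 ↔ (a = 0 ↔ b = 0)) := by decide
  unfold signChar
  by_cases ha : a = 0 <;> by_cases hb : b = 0 <;> simp [key, ha, hb]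

lemma signChar_le_one (a : ZMod 2) : signChar a ≤ 1 := by
  unfold signChar; split_ifs <;> norm_num

lemma IsQuadratic.add {n : ℕ} {f g : (Fin n → ZMod 2) → ZMod 2}
    (hf : IsQuadratic f) (hg : IsQuadratic g) : IsQuadratic (f + g) := by
  obtain ⟨A, B, h⟩ := hf
  obtain ⟨A', B', h'⟩ := hg
  refine ⟨A + A', B + B', fun x => ?_⟩
  simp only [Pi.add_apply, h, h', add_mul, sum_add_distrib]
  ring

lemma IsQuadratic.sum {n : ℕ} {ι : Type*} (s : Finset ι) (f : ι → (Fin n → ZMod 2) → ZMod 2)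
    (hf : ∀ i, IsQuadratic (f i)) : IsQuadratic (∑ i ∈ s, f i) := by
  classical
  induction s using Finset.induction_on with
  | empty => exact ⟨0, 0, fun x => by simp⟩
  | insert a s ha ih => rw [sum_insert ha]; exact (hf a).add ih

lemma isQuadratic_mul_of_lt {n : ℕ} (i j : Fin n) (hij : i < j) (b : ZMod 2) :
    IsQuadratic (fun x => b * x i * x j) := by
  refine ⟨fun k l => if k = i then (if l = j then b else 0) else 0, 0, fun x => ?_⟩
  rw [sum_eq_single i, sum_eq_single j] <;> simp +contextual [hij]

lemma isQuadratic_mul {n : ℕ} (i j : Fin n) (hij : j ≠ i) (b : ZMod 2) :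
    IsQuadratic (fun x => b * x i * x j) := by
  rcases lt_or_gt_of_ne hij with h | h
  · have := isQuadratic_mul_of_lt j i h b
    simpa only [mul_right_comm] using this
  · exact isQuadratic_mul_of_lt i j h b

/-- The quadratic function `x i * ∑ j ≠ i, b j * x j`. -/
def starQuad {n : ℕ} (i : Fin n) (b : {j : Fin n // j ≠ i} → ZMod 2) :
    (Fin n → ZMod 2) → ZMod 2 :=
  ∑ j, fun x => b j * x i * x j

lemma starQuad_apply {n : ℕ} (i : Fin n) (b : {j : Fin n // j ≠ i} → ZMod 2)
    (x : Fin n → ZMod 2) : starQuad i b x = ∑ j, b j * x i * x j := by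
  simp [starQuad]

lemma isQuadratic_starQuad {n : ℕ} (i : Fin n) (b : {j : Fin n // j ≠ i} → ZMod 2) :
    IsQuadratic (starQuad i b) :=
  IsQuadratic.sum _ _ fun j => isQuadratic_mul i j j.2 (b j)

/-- If `h i = 1`, the polarization of `starQuad i b` along `h` at the basis vector `e j` is `b j`. -/
lemma starQuad_polar {n : ℕ} (i : Fin n) (b : {j : Fin n // j ≠ i} → ZMod 2)
    (h : Fin n → ZMod 2) (hi : h i = 1) (j : {j : Fin n // j ≠ i}) :
    starQuad i b (Pi.single j.1 1 + h) + starQuad i b (Pi.single j.1 1) + starQuad i b h = b j := by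
  have hne : i ≠ j.1 := j.2.symm
  have h2 : ∀ a : ZMod 2, a + a = 0 := by decide
  have e : ∀ k : {j : Fin n // j ≠ i},
      b k * (Pi.single j.1 1 : Fin n → ZMod 2) k = if k = j then b j else 0 := by
    intro k
    by_cases hk : k = j
    · subst hk; simp
    · have : (k : Fin n) ≠ j := fun h => hk (Subtype.ext h)
      simp [hk, this]
  simp only [starQuad_apply, Pi.add_apply, Pi.single_eq_of_ne hne, hi, zero_add, mul_one, mul_zero,
    zero_mul, sum_const_zero, add_zero, mul_add, sum_add_distrib, e]
  rw [add_assoc, h2]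
  simp

lemma card_radical_fiber {n : ℕ} (h : Fin n → ZMod 2) (hh : h ≠ 0) :
    ((quadratics n).filter (fun f => h ∈ radical f)).card * 2 ^ (n - 1) ≤ (quadratics n).card := by
  classical
  obtain ⟨i, hi⟩ := Function.ne_iff.mp hh
  have hi1 : h i = 1 := by
    have : ∀ a : ZMod 2, a ≠ 0 → a = 1 := by decide
    exact this _ hi
  have hcard : (univ : Finset ({j : Fin n // j ≠ i} → ZMod 2)).card = 2 ^ (n - 1) := by
    simp [Fintype.card_subtype_compl]
  rw [← hcard, ← card_product]
  refine card_le_card_of_injOn (fun p => p.1 + starQuad i p.2) ?_ ?_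
  · rintro ⟨f, b⟩ hp
    simp only [coe_product, Set.mem_prod, mem_coe, mem_filter, quadratics, mem_univ,
      true_and] at hp ⊢
    exact hp.1.1.add (isQuadratic_starQuad i b)
  · rintro ⟨f, b⟩ hp ⟨f', b'⟩ hp' heq
    simp only [coe_product, Set.mem_prod, mem_coe, mem_filter, radical, mem_univ,
      true_and] at hp hp' heq
    have hb : b = b' := by
      funext j
      have h1 := hp.1.2 (Pi.single j.1 1)
      have h2 := hp'.1.2 (Pi.single j.1 1)
      have h3 := starQuad_polar i b h hi1 j
      have h4 := starQuad_polar i b' h hi1 j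
      have e1 := congrFun heq (Pi.single j.1 1 + h)
      have e2 := congrFun heq (Pi.single j.1 1)
      have e3 := congrFun heq h
      simp only [Pi.add_apply] at e1 e2 e3
      linear_combination e1 + e2 + e3 - h1 + h2 - h3 + h4
    subst hb
    simpa using heq

/-- The radical of a uniformly random quadratic function has average size at most `3`. -/
lemma sum_card_radical (n : ℕ) (hn : 1 ≤ n) :
    ∑ f ∈ quadratics n, (radical f).card ≤ 3 * (quadratics n).card := by
  classical
  have swap : ∑ f ∈ quadratics n, (radical f).card
      = ∑ h : Fin n → ZMod 2, ((quadratics n).filter (fun f => h ∈ radical f)).card := by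
    have := sum_card_bipartiteAbove_eq_sum_card_bipartiteBelow (s := quadratics n)
      (t := (univ : Finset (Fin n → ZMod 2))) (fun f h => h ∈ radical f)
    simpa [bipartiteAbove, bipartiteBelow] using this
  rw [swap, ← add_sum_erase univ _ (mem_univ 0)]
  have h0 : ((quadratics n).filter (fun f => (0 : Fin n → ZMod 2) ∈ radical f)).card
      ≤ (quadratics n).card := card_filter_le _ _
  have h1 : (∑ h ∈ univ.erase (0 : Fin n → ZMod 2),
      ((quadratics n).filter (fun f => h ∈ radical f)).card) * 2 ^ (n - 1)
      ≤ 2 * (quadratics n).card * 2 ^ (n - 1) := by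
    rw [sum_mul]
    calc _ ≤ ∑ h ∈ univ.erase (0 : Fin n → ZMod 2), (quadratics n).card :=
          sum_le_sum fun h hh => card_radical_fiber h (ne_of_mem_erase hh)
      _ ≤ 2 ^ n * (quadratics n).card := by
          rw [sum_const, smul_eq_mul]
          gcongr
          refine (card_erase_le).trans ?_
          simp
      _ = _ := by
          obtain ⟨m, rfl⟩ : ∃ m, n = m + 1 := ⟨n - 1, by omega⟩
          simp only [Nat.add_sub_cancel]
          ring
  have h2 := Nat.le_of_mul_le_mul_right h1 (by positivity)
  omega

lemma IsQuadratic.polar_add {n : ℕ} {f : (Fin n → ZMod 2) → ZMod 2} (hf : IsQuadratic f)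
    (h x y : Fin n → ZMod 2) :
    f (x + y + h) + f (x + y) + f h
      = (f (x + h) + f x + f h) + (f (y + h) + f y + f h) := by
  obtain ⟨A, B, hf⟩ := hf
  have h2 : (2 : ZMod 2) = 0 := by decide
  have key : ∀ x, f (x + h) + f x + f h = ∑ i, ∑ j ∈ univ.filter (fun j => i < j),
      A i j * (x i * h j + h i * x j) := by
    intro x
    simp only [hf]
    have hlin : ∑ i, B i * (x + h) i = ∑ i, B i * x i + ∑ i, B i * h i := by
      simp [mul_add, sum_add_distrib]
    have hquad : ∑ i, ∑ j ∈ univ.filter (fun j => i < j), A i j * (x + h) i * (x + h) j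
        = ∑ i, ∑ j ∈ univ.filter (fun j => i < j), A i j * x i * x j
        + ∑ i, ∑ j ∈ univ.filter (fun j => i < j), A i j * h i * h j
        + ∑ i, ∑ j ∈ univ.filter (fun j => i < j), A i j * (x i * h j + h i * x j) := by
      simp only [← sum_add_distrib]
      refine sum_congr rfl fun i _ => sum_congr rfl fun j _ => ?_
      simp only [Pi.add_apply]
      ring
    rw [hlin, hquad]
    linear_combination (∑ i, ∑ j ∈ univ.filter (fun j => i < j), A i j * x i * x j
        + ∑ i, ∑ j ∈ univ.filter (fun j => i < j), A i j * h i * h j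
        + ∑ i, B i * x i + ∑ i, B i * h i) * h2
  rw [key, key, key]
  simp only [← sum_add_distrib]
  refine sum_congr rfl fun i _ => sum_congr rfl fun j _ => ?_
  simp only [Pi.add_apply]
  ring

/-- Orthogonality: the character sum of a nonzero additive map vanishes. -/
lemma sum_signChar_eq_zero {n : ℕ} (φ : (Fin n → ZMod 2) → ZMod 2)
    (hφ : ∀ x y, φ (x + y) = φ x + φ y) (y : Fin n → ZMod 2) (hy : φ y ≠ 0) :
    ∑ x, signChar (φ x) = 0 := by
  have h1 : ∑ x, signChar (φ x) = ∑ x, signChar (φ (x + y)) :=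
    (Equiv.sum_comp (Equiv.addRight y) (fun x => signChar (φ x))).symm
  have h2 : ∑ x, signChar (φ (x + y)) = - ∑ x, signChar (φ x) := by
    rw [← sum_neg_distrib]
    refine sum_congr rfl fun x _ => ?_
    rw [hφ, signChar_add]
    simp [signChar, hy]
  linarith

/-- The squared correlation of a quadratic function with any additive function is controlled by
the size of the radical alone. -/
lemma charSum_sq_le {n : ℕ} {f g : (Fin n → ZMod 2) → ZMod 2} (hf : IsQuadratic f)
    (hg : ∀ x y, g (x + y) = g x + g y) :
    (∑ x, signChar (f x + g x)) ^ 2 ≤ 2 ^ n * ((radical f).card : ℝ) := by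
  classical
  have h2 : ∀ a : ZMod 2, a + a = 0 := by decide
  have expand : (∑ x, signChar (f x + g x)) ^ 2
      = ∑ h, signChar (f h + g h) * ∑ x, signChar (f (x + h) + f x + f h) := by
    rw [sq, sum_mul]
    have : ∀ x, signChar (f x + g x) * ∑ y, signChar (f y + g y)
        = ∑ h, signChar (f h + g h) * signChar (f (x + h) + f x + f h) := by
      intro x
      rw [mul_sum, ← Equiv.sum_comp (Equiv.addLeft x)]
      refine sum_congr rfl fun h _ => ?_
      rw [← signChar_add, ← signChar_add]
      congr 1
      simp only [Equiv.coe_addLeft, hg]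
      linear_combination h2 (g x) - h2 (f h)
    rw [sum_congr rfl fun x _ => this x, sum_comm]
    simp only [mul_sum]
  have hterm : ∀ h, signChar (f h + g h) * ∑ x, signChar (f (x + h) + f x + f h)
      ≤ if h ∈ radical f then (2 : ℝ) ^ n else 0 := by
    intro h
    split_ifs with hr
    · simp only [radical, mem_filter, mem_univ, true_and] at hr
      have : ∑ x, signChar (f (x + h) + f x + f h) = (2 : ℝ) ^ n := by
        simp [hr, signChar]
      rw [this]
      exact mul_le_of_le_one_left (by positivity) (signChar_le_one _)
    · simp only [radical, mem_filter, mem_univ, true_and, not_forall] at hr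
      obtain ⟨y, hy⟩ := hr
      rw [sum_signChar_eq_zero (fun x => f (x + h) + f x + f h)
        (fun x y => hf.polar_add h x y) y hy, mul_zero]
  rw [expand]
  refine (sum_le_sum fun h _ => hterm h).trans ?_
  rw [sum_ite_mem, univ_inter, sum_const, nsmul_eq_mul, mul_comm]

lemma agreement_eq {n : ℕ} (f g : (Fin n → ZMod 2) → ZMod 2) :
    agreement f g = |∑ x, signChar (f x + g x)| / 2 ^ n := by
  have key : ∀ a b : ZMod 2, a + b = 0 ↔ a = b := by decide
  unfold agreement signChar
  congr 2
  simp only [key]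
  rw [sum_ite]
  simp [sub_eq_add_neg]

/-- With `c = 1 / 4`: a large agreement forces the radical to have more than `2 ^ (n / 2)`
elements. -/
lemma radical_large {n : ℕ} {f g : (Fin n → ZMod 2) → ZMod 2} (hf : IsQuadratic f)
    (hg : IsLinearFun g) (hag : agreement f g > (2 : ℝ) ^ (-(1 / 4 * (n : ℝ)))) :
    (2 : ℝ) ^ ((n : ℝ) / 2) ≤ (radical f).card := by
  obtain ⟨c, hc⟩ := hg
  have hadd : ∀ x y, g (x + y) = g x + g y := by
    intro x y
    simp [hc, mul_add, sum_add_distrib]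
  have hS := charSum_sq_le hf hadd
  rw [agreement_eq, gt_iff_lt, lt_div_iff₀ (by positivity)] at hag
  rw [← sq_abs] at hS
  have hsq : ((2 : ℝ) ^ (-(1 / 4 * (n : ℝ))) * 2 ^ n) ^ 2
      = 2 ^ n * (2 : ℝ) ^ ((n : ℝ) / 2) := by
    rw [← Real.rpow_natCast 2 n, ← Real.rpow_add two_pos, ← Real.rpow_add two_pos,
      ← Real.rpow_natCast, ← Real.rpow_mul two_pos.le]
    congr 1
    push_cast
    ring
  have hlt := pow_le_pow_left₀ (by positivity) hag.le 2
  rw [hsq] at hlt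
  exact le_of_mul_le_mul_left (hlt.trans hS) (by positivity)

theorem random_quadratic_far_from_linear :
    ∃ c : ℝ, 0 < c ∧ ∃ N : ℕ, ∀ n : ℕ, N ≤ n →
      (Nat.card {f : (Fin n → ZMod 2) → ZMod 2 //
          IsQuadratic f ∧ ∃ g, IsLinearFun g ∧ agreement f g > (2 : ℝ) ^ (-(c * n))} : ℝ)
        ≤ (2 : ℝ) ^ (-(c * n)) *
          (Nat.card {f : (Fin n → ZMod 2) → ZMod 2 // IsQuadratic f} : ℝ) := by
  classical
  refine ⟨1 / 4, by norm_num, 8, fun n hn => ?_⟩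
  have hM : Nat.card {f : (Fin n → ZMod 2) → ZMod 2 // IsQuadratic f} = (quadratics n).card := by
    rw [Nat.card_eq_fintype_card, Fintype.card_subtype, quadratics]
  rw [hM, Nat.card_eq_fintype_card, Fintype.card_subtype]
  set bad := univ.filter (fun f : (Fin n → ZMod 2) → ZMod 2 =>
    IsQuadratic f ∧ ∃ g, IsLinearFun g ∧ agreement f g > (2 : ℝ) ^ (-(1 / 4 * (n : ℝ)))) with hbad
  have hsub : bad ⊆ quadratics n := by
    intro f hf
    simp only [hbad, quadratics, mem_filter, mem_univ, true_and] at hf ⊢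
    exact hf.1
  -- Markov's inequality for the size of the radical.
  have hmarkov : (bad.card : ℝ) * (2 : ℝ) ^ ((n : ℝ) / 2) ≤ 3 * (quadratics n).card := by
    calc (bad.card : ℝ) * (2 : ℝ) ^ ((n : ℝ) / 2)
        = ∑ f ∈ bad, (2 : ℝ) ^ ((n : ℝ) / 2) := by rw [sum_const, nsmul_eq_mul]
      _ ≤ ∑ f ∈ bad, ((radical f).card : ℝ) := by
          refine sum_le_sum fun f hf => ?_
          simp only [hbad, mem_filter, mem_univ, true_and] at hf
          obtain ⟨hq, g, hg, hag⟩ := hf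
          exact radical_large hq hg hag
      _ ≤ ∑ f ∈ quadratics n, ((radical f).card : ℝ) :=
          sum_le_sum_of_subset_of_nonneg hsub fun _ _ _ => by positivity
      _ ≤ 3 * (quadratics n).card := by exact_mod_cast sum_card_radical n (by omega)
  have h3 : (3 : ℝ) ≤ (2 : ℝ) ^ ((n : ℝ) / 4) := by
    have h8 : (8 : ℝ) ≤ n := by exact_mod_cast hn
    calc (3 : ℝ) ≤ (2 : ℝ) ^ (2 : ℝ) := by norm_num
      _ ≤ (2 : ℝ) ^ ((n : ℝ) / 4) :=
          Real.rpow_le_rpow_of_exponent_le (by norm_num) (by linarith)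
  have hsplit : (2 : ℝ) ^ (-(1 / 4 * (n : ℝ))) * (2 : ℝ) ^ ((n : ℝ) / 2)
      = (2 : ℝ) ^ ((n : ℝ) / 4) := by
    rw [← Real.rpow_add two_pos]
    congr 1
    ring
  refine le_of_mul_le_mul_right ?_ (by positivity : (0 : ℝ) < (2 : ℝ) ^ ((n : ℝ) / 2))
  calc (bad.card : ℝ) * (2 : ℝ) ^ ((n : ℝ) / 2) ≤ 3 * (quadratics n).card := hmarkov
    _ ≤ (2 : ℝ) ^ ((n : ℝ) / 4) * (quadratics n).card := by gcongr
    _ = _ := by rw [← hsplit]; ring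
end

section
/- Let A be an n × n matrix over ZMod 2, b ∈ (Fin n → ZMod 2), let f(x) = xᵀ A x + ⟨b, x⟩, and let r be the rank of A + Aᵀ over ZMod 2. For c ∈ (Fin n → ZMod 2) define the Fourier coefficient F̂(c) = 2^(−n) · Σ_{x} (−1)^{f(x) + ⟨c,x⟩} ∈ ℝ (where the exponent is interpreted as 0 or 1 via ZMod 2). Then for every c, |F̂(c)| is either 0 or 2^(−r/2), and the number of c with F̂(c) ≠ 0 is exactly 2^r. -/
/-!
Write `M = A + Aᵀ` and `g x = f x + ⟨c, x⟩`. The function `g` is quadratic with polarization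
`g (x + y) = g x + g y + ⟨x, M y⟩`, so substituting `x + y` for the second variable in the square
of `S = ∑ x, (-1) ^ g x` and summing over `x` first leaves `S ^ 2 = 2 ^ n * ∑_{y ∈ ker M} (-1) ^ g y`
by orthogonality of characters. On `ker M` the function `g` is additive, so the last sum is either
`0` or `|ker M| = 2 ^ (n - r)` (`sum_sq_dichotomy`). Hence the square of every Fourier coefficient
is `0` or `2 ^ (-r)`. Parseval's identity (`parseval`) says that these squares sum to `1`, so
exactly `2 ^ r` of them are nonzero.
-/

open Matrix

/-- `(−1)^a` for `a : ZMod 2`. -/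
def sign2 (a : ZMod 2) : ℝ := if a = 0 then 1 else -1

/-- The Fourier coefficient `F̂(c) = 2^(−n) · Σ_x (−1)^(f(x) + ⟨c,x⟩)`. -/
noncomputable def fourierCoeff2 {n : ℕ} (f : (Fin n → ZMod 2) → ZMod 2)
    (c : Fin n → ZMod 2) : ℝ :=
  (∑ x : Fin n → ZMod 2, sign2 (f x + ∑ i, c i * x i)) / 2 ^ n

lemma sign2_add (a b : ZMod 2) : sign2 (a + b) = sign2 a * sign2 b := by
  have h : (1 + 1 : ZMod 2) = 0 := by decide
  obtain rfl | rfl : a = 0 ∨ a = 1 := by revert a; decide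
  · simp [sign2]
  · obtain rfl | rfl : b = 0 ∨ b = 1 := by revert b; decide
    · simp [sign2]
    · simp [sign2, h]

lemma sign2_mul_self (a : ZMod 2) : sign2 a * sign2 a = 1 := by
  unfold sign2; split_ifs <;> norm_num

/-- A sum that changes sign under a translation of the variable vanishes. -/
lemma sum_eq_zero_of_translate {n : ℕ} (F : (Fin n → ZMod 2) → ℝ) (y : Fin n → ZMod 2)
    (h : ∀ x, F (x + y) = -F x) : ∑ x, F x = 0 := by
  have h1 : ∑ x, F (x + y) = ∑ x, F x := Equiv.sum_comp (Equiv.addRight y) F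
  simp only [h, Finset.sum_neg_distrib] at h1
  linarith

/-- Orthogonality of the characters of `(ZMod 2) ^ n`. -/
lemma sum_sign2_dotProduct {n : ℕ} (v : Fin n → ZMod 2) :
    ∑ x : Fin n → ZMod 2, sign2 (x ⬝ᵥ v) = if v = 0 then 2 ^ n else 0 := by
  split_ifs with hv
  · simp [hv, sign2]
  · obtain ⟨i, hi⟩ := Function.ne_iff.mp hv
    refine sum_eq_zero_of_translate _ (Pi.single i 1) fun x => ?_
    have hi' : v i ≠ 0 := hi
    rw [add_dotProduct, sign2_add, single_dotProduct]
    simp [sign2, hi']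

/-- The square of an exponential sum, as a sum of sums over the derivatives of the phase. -/
lemma sum_sign2_sq {n : ℕ} (g : (Fin n → ZMod 2) → ZMod 2) :
    (∑ x, sign2 (g x)) ^ 2 = ∑ y, ∑ x, sign2 (g x) * sign2 (g (x + y)) := by
  rw [sq, Finset.sum_mul_sum, Finset.sum_comm (s := Finset.univ)
    (f := fun y x => sign2 (g x) * sign2 (g (x + y)))]
  refine Finset.sum_congr rfl fun x _ => ?_
  exact (Equiv.sum_comp (Equiv.addLeft x) fun z => sign2 (g x) * sign2 (g z)).symm

/-- Rank–nullity, counted over the field with two elements. -/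
lemma card_ker_mul {n : ℕ} (M : Matrix (Fin n) (Fin n) (ZMod 2)) :
    ((Finset.univ.filter fun y => M *ᵥ y = 0).card : ℝ) * 2 ^ M.rank = 2 ^ n := by
  have h1 : (Finset.univ.filter fun y => M *ᵥ y = 0).card
      = 2 ^ Module.finrank (ZMod 2) (LinearMap.ker M.mulVecLin) := by
    have h := Module.natCard_eq_pow_finrank (K := ZMod 2) (V := LinearMap.ker M.mulVecLin)
    rw [Nat.card_zmod] at h
    rw [← h, ← Fintype.card_subtype, ← Nat.card_eq_fintype_card]
    exact Nat.card_congr (Equiv.subtypeEquivRight fun y => by simp)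
  have h2 := LinearMap.finrank_range_add_finrank_ker M.mulVecLin
  rw [Module.finrank_fin_fun] at h2
  rw [h1, Matrix.rank]
  push_cast
  rw [← pow_add, add_comm, h2]

lemma sum_sq_dichotomy {n : ℕ} (M : Matrix (Fin n) (Fin n) (ZMod 2))
    (g : (Fin n → ZMod 2) → ZMod 2) (hg : ∀ x y, g (x + y) = g x + g y + x ⬝ᵥ M *ᵥ y) :
    (∑ x, sign2 (g x)) ^ 2 = 0 ∨
      (∑ x, sign2 (g x)) ^ 2 * 2 ^ M.rank = 2 ^ n * 2 ^ n := by
  have key : (∑ x, sign2 (g x)) ^ 2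
      = 2 ^ n * ∑ y, if M *ᵥ y = 0 then sign2 (g y) else 0 := by
    rw [sum_sign2_sq, Finset.mul_sum]
    refine Finset.sum_congr rfl fun y _ => ?_
    have h : ∀ x, sign2 (g x) * sign2 (g (x + y)) = sign2 (g y) * sign2 (x ⬝ᵥ M *ᵥ y) := by
      intro x
      rw [hg, sign2_add, sign2_add]
      linear_combination sign2 (g y) * sign2 (x ⬝ᵥ M *ᵥ y) * sign2_mul_self (g x)
    simp only [h, ← Finset.mul_sum, sum_sign2_dotProduct]
    split_ifs <;> ring
  by_cases hz : ∃ y, M *ᵥ y = 0 ∧ g y ≠ 0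
  · obtain ⟨y, hy, hgy⟩ := hz
    left
    rw [key, sum_eq_zero_of_translate _ y, mul_zero]
    intro x
    rw [Matrix.mulVec_add, hy, add_zero, hg, hy, dotProduct_zero, add_zero, sign2_add]
    split_ifs <;> simp [sign2, hgy]
  · push Not at hz
    right
    have h : ∀ y, (if M *ᵥ y = 0 then sign2 (g y) else 0) = if M *ᵥ y = 0 then (1 : ℝ) else 0 := by
      intro y
      split_ifs with hy
      · simp [hz y hy, sign2]
      · rfl
    rw [key, Finset.sum_congr rfl fun y _ => h y, Finset.sum_boole, mul_assoc, card_ker_mul]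

lemma parseval {n : ℕ} (f : (Fin n → ZMod 2) → ZMod 2) :
    ∑ c, fourierCoeff2 f c ^ 2 = 1 := by
  have h : ∑ c : Fin n → ZMod 2, (∑ x, sign2 (f x + c ⬝ᵥ x)) ^ 2 = 2 ^ n * 2 ^ n := by
    have h1 : ∀ c x y : Fin n → ZMod 2, sign2 (f x + c ⬝ᵥ x) * sign2 (f (x + y) + c ⬝ᵥ (x + y))
        = sign2 (f x) * sign2 (f (x + y)) * sign2 (c ⬝ᵥ y) := by
      intro c x y
      rw [dotProduct_add, sign2_add, sign2_add, sign2_add]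
      linear_combination sign2 (f x) * sign2 (f (x + y)) * sign2 (c ⬝ᵥ y)
        * sign2_mul_self (c ⬝ᵥ x)
    have h2 : ∀ c : Fin n → ZMod 2, (∑ x, sign2 (f x + c ⬝ᵥ x)) ^ 2
        = ∑ y, (∑ x, sign2 (f x) * sign2 (f (x + y))) * sign2 (c ⬝ᵥ y) := by
      intro c
      rw [sum_sign2_sq]
      simp only [h1, Finset.sum_mul]
    simp only [h2]
    rw [Finset.sum_comm]
    simp only [← Finset.mul_sum, sum_sign2_dotProduct]
    simp [sign2_mul_self]
  simp only [fourierCoeff2, div_pow, ← Finset.sum_div]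
  rw [div_eq_one_iff_eq (by positivity)]
  exact h.trans (by ring)

theorem fourier_of_quadratic {n : ℕ} (A : Matrix (Fin n) (Fin n) (ZMod 2))
    (b : Fin n → ZMod 2)
    (f : (Fin n → ZMod 2) → ZMod 2)
    (hf : ∀ x, f x = (∑ i, ∑ j, A i j * x i * x j) + ∑ i, b i * x i)
    (r : ℕ) (hr : r = (A + Aᵀ).rank) :
    (∀ c : Fin n → ZMod 2,
      fourierCoeff2 f c = 0 ∨ |fourierCoeff2 f c| = (2 : ℝ) ^ (-(r : ℝ) / 2)) ∧
    Nat.card {c : Fin n → ZMod 2 // fourierCoeff2 f c ≠ 0} = 2 ^ r := by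
  have hf' : ∀ x, f x = x ⬝ᵥ A *ᵥ x + b ⬝ᵥ x := by
    intro x
    rw [hf]
    simp only [dotProduct, mulVec, Finset.mul_sum]
    congr 1
    exact Finset.sum_congr rfl fun i _ => Finset.sum_congr rfl fun j _ => by ring
  have hpol : ∀ c x y : Fin n → ZMod 2, f (x + y) + c ⬝ᵥ (x + y)
      = (f x + c ⬝ᵥ x) + (f y + c ⬝ᵥ y) + x ⬝ᵥ (A + Aᵀ) *ᵥ y := by
    intro c x y
    have ht : x ⬝ᵥ Aᵀ *ᵥ y = y ⬝ᵥ A *ᵥ x := by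
      rw [mulVec_transpose, dotProduct_comm, ← dotProduct_mulVec]
    simp only [hf', mulVec_add, add_mulVec, dotProduct_add, add_dotProduct, ht]
    ring
  have hsq : ∀ c, fourierCoeff2 f c = 0 ∨ fourierCoeff2 f c ^ 2 * 2 ^ r = 1 := by
    intro c
    rcases sum_sq_dichotomy (A + Aᵀ) (fun x => f x + c ⬝ᵥ x) (hpol c) with h | h
    · left
      have h0 : ∑ x : Fin n → ZMod 2, sign2 (f x + ∑ i, c i * x i) = 0 := by
        simpa [dotProduct] using h
      rw [fourierCoeff2, h0, zero_div]
    · right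
      rw [fourierCoeff2, hr, div_pow, div_mul_eq_mul_div, div_eq_one_iff_eq (by positivity)]
      exact h.trans (by ring)
  refine ⟨fun c => (hsq c).imp_right fun h => ?_, ?_⟩
  · have h2 : ((2 : ℝ) ^ (-(r : ℝ) / 2)) ^ 2 = (2 ^ r)⁻¹ := by
      rw [← Real.rpow_natCast, ← Real.rpow_mul (by norm_num)]
      rw [Nat.cast_ofNat, div_mul_cancel₀ _ (by norm_num), Real.rpow_neg (by norm_num),
        Real.rpow_natCast]
    rw [← abs_of_pos (Real.rpow_pos_of_pos (two_pos : (0 : ℝ) < 2) (-(r : ℝ) / 2)),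
      ← sq_eq_sq_iff_abs_eq_abs, h2]
    exact eq_inv_of_mul_eq_one_left h
  · classical
    -- By `hsq`, the summands of Parseval's identity scaled by `2 ^ r` are indicators.
    have h1 : ∀ c, fourierCoeff2 f c ^ 2 * 2 ^ r = if fourierCoeff2 f c ≠ 0 then (1 : ℝ) else 0 := by
      intro c
      split_ifs with h0
      · exact (hsq c).resolve_left h0
      · simp [not_not.mp h0]
    have h2 := congrArg (· * (2 : ℝ) ^ r) (parseval f)
    simp only [Finset.sum_mul, h1, Finset.sum_boole, one_mul] at h2
    rw [Nat.card_eq_fintype_card, Fintype.card_subtype]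
    exact_mod_cast h2
end
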